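/- arXiv:2512.14326 — 6 statements merged into one kernel-verified Lean document; each statement's English description precedes it below -/
import Mathlib

section
/- Let K be an elementary class of algebras (a class of similar algebras axiomatized by a set of first-order formulas in a purely functional language). A partial function f on K is an implicit operation of K if and only if f is defined by an existential positive formula. -/
namespace Impl

open FirstOrder Language

universe u v

/-- A bundled algebra (first-order structure) for the language `L`. -/
structure Alg (L : FirstOrder.Language.{u, u}) : Type (u + 1) where
  carrier : Type u
  [str : L.Structure carrier]

attribute [instance] Alg.str

variable {L : FirstOrder.Language.{u, u}}

/-- The direct product of a family of algebras. -/
def Alg.pi {ι : Type u} (A : ι → Alg L) : Alg L where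
  carrier := ∀ i, (A i).carrier
  str :=
    { funMap := fun {k} f v i => Structure.funMap f fun j => v j i
      RelMap := fun {k} r v => ∀ i, Structure.RelMap r fun j => v j i }

/-- The binary direct product of two algebras. -/
def Alg.prod (A B : Alg L) : Alg L where
  carrier := A.carrier × B.carrier
  str :=
    { funMap := fun {k} f v =>
        (Structure.funMap f fun j => (v j).1, Structure.funMap f fun j => (v j).2)
      RelMap := fun {k} r v =>
        Structure.RelMap r (fun j => (v j).1) ∧ Structure.RelMap r fun j => (v j).2 }

/-- The ultraproduct of a family of algebras with respect to an ultrafilter. -/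
def Alg.uprod {ι : Type u} (F : Ultrafilter ι) (A : ι → Alg L) : Alg L where
  carrier := Filter.Product (F : Filter ι) fun i => (A i).carrier
  str := inferInstance

/-- Closure under isomorphic copies. -/
def ClosedUnderIso (K : Set (Alg L)) : Prop :=
  ∀ A B : Alg L, A ∈ K → Nonempty (A.carrier ≃[L] B.carrier) → B ∈ K

/-- Closure under subalgebras (up to the identification of a subalgebra with an embedding). -/
def ClosedUnderSub (K : Set (Alg L)) : Prop :=
  ∀ A B : Alg L, B ∈ K → Nonempty (A.carrier ↪[L] B.carrier) → A ∈ K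

/-- Closure under direct products. -/
def ClosedUnderProd (K : Set (Alg L)) : Prop :=
  ∀ (ι : Type u) (A : ι → Alg L), (∀ i, A i ∈ K) → Alg.pi A ∈ K

/-- Closure under finite direct products. -/
def ClosedUnderFinProd (K : Set (Alg L)) : Prop :=
  ∀ (ι : Type u), Finite ι → ∀ A : ι → Alg L, (∀ i, A i ∈ K) → Alg.pi A ∈ K

/-- Closure under homomorphic images. -/
def ClosedUnderHomImg (K : Set (Alg L)) : Prop :=
  ∀ A B : Alg L, A ∈ K → ∀ h : A.carrier →[L] B.carrier, Function.Surjective h → B ∈ K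

/-- Closure under ultraproducts. -/
def ClosedUnderUprod (K : Set (Alg L)) : Prop :=
  ∀ (ι : Type u) (F : Ultrafilter ι) (A : ι → Alg L), (∀ i, A i ∈ K) → Alg.uprod F A ∈ K

/-- A universal class: a class closed under isomorphic copies, subalgebras and ultraproducts. -/
def IsUniversalClass (K : Set (Alg L)) : Prop :=
  ClosedUnderIso K ∧ ClosedUnderSub K ∧ ClosedUnderUprod K

/-- A quasivariety: a class closed under isomorphic copies, subalgebras, direct products and
ultraproducts. -/
def IsQuasivariety (K : Set (Alg L)) : Prop :=
  ClosedUnderIso K ∧ ClosedUnderSub K ∧ ClosedUnderProd K ∧ ClosedUnderUprod K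

/-- A variety: a class closed under homomorphic images, subalgebras and direct products. -/
def IsVariety (K : Set (Alg L)) : Prop :=
  ClosedUnderHomImg K ∧ ClosedUnderSub K ∧ ClosedUnderProd K

/-- The least quasivariety containing `K`. -/
def QGen (K : Set (Alg L)) : Set (Alg L) :=
  ⋂₀ { M : Set (Alg L) | IsQuasivariety M ∧ K ⊆ M }

/-- The least variety containing `K`. -/
def VGen (K : Set (Alg L)) : Set (Alg L) :=
  ⋂₀ { M : Set (Alg L) | IsVariety M ∧ K ⊆ M }

/-- An elementary class: the class of all models of some first-order theory. -/
def IsElementary (K : Set (Alg L)) : Prop :=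
  ∃ T : L.Theory, ∀ A : Alg L, A ∈ K ↔ ∀ φ ∈ T, A.carrier ⊨ φ

/-- Finite conjunctions of equations (with `⊤` as the empty conjunction). -/
inductive IsConjEq {α : Type v} : ∀ {k : ℕ}, L.BoundedFormula α k → Prop
  | top {k} : IsConjEq (⊤ : L.BoundedFormula α k)
  | equal {k} (t₁ t₂ : L.Term (α ⊕ Fin k)) : IsConjEq (BoundedFormula.equal t₁ t₂)
  | inf {k} {φ ψ : L.BoundedFormula α k} : IsConjEq φ → IsConjEq ψ → IsConjEq (φ ⊓ ψ)

/-- Positive quantifier-free formulas: built from equations, `⊤` and `⊥` using `⊓` and `⊔`. -/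
inductive IsPosQF {α : Type v} : ∀ {k : ℕ}, L.BoundedFormula α k → Prop
  | falsum {k} : IsPosQF (⊥ : L.BoundedFormula α k)
  | top {k} : IsPosQF (⊤ : L.BoundedFormula α k)
  | equal {k} (t₁ t₂ : L.Term (α ⊕ Fin k)) : IsPosQF (BoundedFormula.equal t₁ t₂)
  | inf {k} {φ ψ : L.BoundedFormula α k} : IsPosQF φ → IsPosQF ψ → IsPosQF (φ ⊓ ψ)
  | sup {k} {φ ψ : L.BoundedFormula α k} : IsPosQF φ → IsPosQF ψ → IsPosQF (φ ⊔ ψ)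

/-- Primitive positive (pp) formulas: existentially quantified finite conjunctions of
equations. -/
inductive IsPP {α : Type v} : ∀ {k : ℕ}, L.BoundedFormula α k → Prop
  | of_conjEq {k} {φ : L.BoundedFormula α k} : IsConjEq φ → IsPP φ
  | ex {k} {φ : L.BoundedFormula α (k + 1)} : IsPP φ → IsPP φ.ex

/-- Existential positive formulas: existentially quantified positive quantifier-free
formulas. -/
inductive IsExistPos {α : Type v} : ∀ {k : ℕ}, L.BoundedFormula α k → Prop
  | of_posQF {k} {φ : L.BoundedFormula α k} : IsPosQF φ → IsExistPos φ
  | ex {k} {φ : L.BoundedFormula α (k + 1)} : IsExistPos φ → IsExistPos φ.ex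

/-- Two formulas are equivalent in a class of algebras. -/
def EquivOn (K : Set (Alg L)) {α : Type v} (φ ψ : L.Formula α) : Prop :=
  ∀ A : Alg L, A ∈ K → ∀ x : α → A.carrier, φ.Realize x ↔ ψ.Realize x

/-- A formula is preserved by homomorphisms in `K`. -/
def PreservedByHomsOn (K : Set (Alg L)) {α : Type v} (φ : L.Formula α) : Prop :=
  ∀ A B : Alg L, A ∈ K → B ∈ K → ∀ (h : A.carrier →[L] B.carrier) (x : α → A.carrier),
    φ.Realize x → φ.Realize fun a => h (x a)

/-- A formula is preserved by direct products in `K`. -/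
def PreservedByProdsOn (K : Set (Alg L)) {α : Type v} (φ : L.Formula α) : Prop :=
  ∀ (ι : Type u) (A : ι → Alg L), (∀ i, A i ∈ K) → ∀ x : α → (Alg.pi A).carrier,
    (∀ i, φ.Realize fun a => x a i) → φ.Realize x

/-- An `n`-ary partial function on a class of algebras `K`: a family assigning to each member of
`K` an `n`-ary partial function on its carrier. -/
def PartialFunOn (K : Set (Alg L)) (n : ℕ) :=
  ∀ (A : Alg L), A ∈ K → ((Fin n → A.carrier) →. A.carrier)

/-- A partial function on `K` is defined by the formula `φ(x₁, …, xₙ, y)` (the last variable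
being the output) when its graph on each member of `K` is the solution set of `φ`. -/
def DefinedBy {K : Set (Alg L)} {n : ℕ} (f : PartialFunOn K n)
    (φ : L.Formula (Fin (n + 1))) : Prop :=
  ∀ (A : Alg L) (hA : A ∈ K) (x : Fin n → A.carrier) (b : A.carrier),
    b ∈ f A hA x ↔ φ.Realize (Fin.snoc x b)

/-- The formula `φ(x₁, …, xₙ, y)` is functional in `K`: for all inputs there is at most one
output satisfying it. -/
def FunctionalIn (K : Set (Alg L)) {n : ℕ} (φ : L.Formula (Fin (n + 1))) : Prop :=
  ∀ A : Alg L, A ∈ K → ∀ (x : Fin n → A.carrier) (b₁ b₂ : A.carrier),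
    φ.Realize (Fin.snoc x b₁) → φ.Realize (Fin.snoc x b₂) → b₁ = b₂

/-- A partial function on `K` is an operation of `K` when it is preserved by all homomorphisms
between members of `K`. -/
def IsOperationOn {K : Set (Alg L)} {n : ℕ} (f : PartialFunOn K n) : Prop :=
  ∀ (A B : Alg L) (hA : A ∈ K) (hB : B ∈ K) (h : A.carrier →[L] B.carrier)
    (x : Fin n → A.carrier) (b : A.carrier),
    b ∈ f A hA x → h b ∈ f B hB fun i => h (x i)

/-- A partial function on `K` is implicit when it is defined by some formula. -/
def IsImplicit {K : Set (Alg L)} {n : ℕ} (f : PartialFunOn K n) : Prop :=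
  ∃ φ : L.Formula (Fin (n + 1)), DefinedBy f φ

/-- An implicit operation of `K`: a partial function that is both implicit and an operation. -/
def IsImplicitOp {K : Set (Alg L)} {n : ℕ} (f : PartialFunOn K n) : Prop :=
  IsImplicit f ∧ IsOperationOn f

/-- An implicit operation is extendable when every tuple in every member of `K` lies in the
domain of the operation in some extension inside `K`. -/
def Extendable {K : Set (Alg L)} {n : ℕ} (f : PartialFunOn K n) : Prop :=
  ∀ (A : Alg L) (hA : A ∈ K) (x : Fin n → A.carrier),
    ∃ (B : Alg L) (hB : B ∈ K) (e : A.carrier ↪[L] B.carrier),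
      (f B hB fun i => e (x i)).Dom

/-- The dominion of a subset `s` of `M` relative to the class `K`. -/
def dominion (K : Set (Alg L)) (M : Type u) [L.Structure M] (s : Set M) : Set M :=
  { b | ∀ C : Alg L, C ∈ K → ∀ g h : M →[L] C.carrier, (∀ a ∈ s, g a = h a) → g b = h b }

/-- The strong epimorphism surjectivity property. -/
def StrongES (K : Set (Alg L)) : Prop :=
  ∀ (A B : Alg L), A ∈ K → B ∈ K → ∀ (f : A.carrier →[L] B.carrier) (b : B.carrier),
    b ∉ Set.range f →
      ∃ C : Alg L, C ∈ K ∧ ∃ g h : B.carrier →[L] C.carrier,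
        (∀ a : A.carrier, g (f a) = h (f a)) ∧ g b ≠ h b

/-- The weak epimorphism surjectivity property: every `K`-epimorphism between finitely
generated members of `K` is surjective. -/
def WeakES (K : Set (Alg L)) : Prop :=
  ∀ (A B : Alg L), A ∈ K → B ∈ K →
    Structure.FG L A.carrier → Structure.FG L B.carrier →
      ∀ f : A.carrier →[L] B.carrier,
        (∀ C : Alg L, C ∈ K → ∀ g h : B.carrier →[L] C.carrier,
          (∀ a : A.carrier, g (f a) = h (f a)) → g = h) →
        Function.Surjective f

/-- The amalgamation property. -/
def HasAmalgamation (K : Set (Alg L)) : Prop :=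
  ∀ (A B C : Alg L), A ∈ K → B ∈ K → C ∈ K →
    ∀ (f : A.carrier ↪[L] B.carrier) (g : A.carrier ↪[L] C.carrier),
      ∃ D : Alg L, D ∈ K ∧ ∃ (f' : B.carrier ↪[L] D.carrier) (g' : C.carrier ↪[L] D.carrier),
        ∀ a : A.carrier, f' (f a) = g' (g a)

/-- A finitely presented member of `K`: an algebra in `K` with a finite presentation, phrased
through the usual universal property of `T(X)/Cg_K(Y)`. -/
def FinitelyPresentedIn (K : Set (Alg L)) (B : Alg L) : Prop :=
  B ∈ K ∧ ∃ (m : ℕ) (Y : Finset (L.Term (Fin m) × L.Term (Fin m))) (b : Fin m → B.carrier),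
    Substructure.closure L (Set.range b) = ⊤ ∧
    (∀ p ∈ Y, p.1.realize b = p.2.realize b) ∧
    ∀ C : Alg L, C ∈ K → ∀ x : Fin m → C.carrier,
      (∀ p ∈ Y, p.1.realize x = p.2.realize x) →
        ∃ g : B.carrier →[L] C.carrier, ∀ i, g (b i) = x i

/-- Subdirectly irreducible relative to `K`. -/
def IsRSI (K : Set (Alg L)) (A : Alg L) : Prop :=
  A ∈ K ∧ ∀ (ι : Type u) (B : ι → Alg L), (∀ i, B i ∈ K) →
    ∀ h : A.carrier ↪[L] (Alg.pi B).carrier,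
      (∀ i, Function.Surjective fun a => h a i) →
        ∃ i, Function.Bijective fun a => h a i

/-- Finitely subdirectly irreducible relative to `K`. -/
def IsRFSI (K : Set (Alg L)) (A : Alg L) : Prop :=
  A ∈ K ∧ ∀ (ι : Type u), Finite ι → ∀ B : ι → Alg L, (∀ i, B i ∈ K) →
    ∀ h : A.carrier ↪[L] (Alg.pi B).carrier,
      (∀ i, Function.Surjective fun a => h a i) →
        ∃ i, Function.Bijective fun a => h a i

/-- A congruence on an algebra: an equivalence relation compatible with all the operations. -/
def IsCongruenceOn (A : Alg L) (θ : A.carrier → A.carrier → Prop) : Prop :=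
  Equivalence θ ∧
    ∀ (k : ℕ) (f : L.Functions k) (x y : Fin k → A.carrier),
      (∀ i, θ (x i) (y i)) → θ (Structure.funMap f x) (Structure.funMap f y)

/-- The quotient of an algebra by (the setoid of) an equivalence relation; when the relation is
a congruence this is the quotient algebra. -/
noncomputable def Alg.quot (A : Alg L) (θ : A.carrier → A.carrier → Prop) (h : Equivalence θ) :
    Alg L where
  carrier := Quotient (⟨θ, h⟩ : Setoid A.carrier)
  str :=
    { funMap := fun {k} f v => Quotient.mk _ (Structure.funMap f fun i => (v i).out)
      RelMap := fun {k} r v => Structure.RelMap r fun i => (v i).out }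

/-- A `K`-congruence of `A`: a congruence whose quotient lies in `K`. -/
def IsRelCong (K : Set (Alg L)) (A : Alg L) (θ : A.carrier → A.carrier → Prop) : Prop :=
  ∃ h : IsCongruenceOn A θ, Alg.quot A θ h.1 ∈ K

/-- The join of two relations in the lattice of `K`-congruences of `A`. -/
def relCongJoin (K : Set (Alg L)) (A : Alg L)
    (θ φ : A.carrier → A.carrier → Prop) (x y : A.carrier) : Prop :=
  ∀ ρ : A.carrier → A.carrier → Prop, IsRelCong K A ρ →
    (∀ a b, θ a b → ρ a b) → (∀ a b, φ a b → ρ a b) → ρ x y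

/-- Relative congruence distributivity: the lattice of `K`-congruences of each member of `K`
is distributive. -/
def RelCongDistributive (K : Set (Alg L)) : Prop :=
  ∀ A : Alg L, A ∈ K → ∀ θ φ ψ : A.carrier → A.carrier → Prop,
    IsRelCong K A θ → IsRelCong K A φ → IsRelCong K A ψ →
      ∀ x y : A.carrier,
        (θ x y ∧ relCongJoin K A φ ψ x y) ↔
          relCongJoin K A (fun a b => θ a b ∧ φ a b) (fun a b => θ a b ∧ ψ a b) x y

/-- The join of two relations in the lattice of congruences of `A`. -/
def congJoin (A : Alg L) (θ φ : A.carrier → A.carrier → Prop) (x y : A.carrier) : Prop :=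
  ∀ ρ : A.carrier → A.carrier → Prop, IsCongruenceOn A ρ →
    (∀ a b, θ a b → ρ a b) → (∀ a b, φ a b → ρ a b) → ρ x y

/-- Congruence permutability for all members of a class. -/
def CongPermutableClass (K : Set (Alg L)) : Prop :=
  ∀ A : Alg L, A ∈ K → ∀ θ φ : A.carrier → A.carrier → Prop,
    IsCongruenceOn A θ → IsCongruenceOn A φ →
      ∀ x y : A.carrier, (∃ z, θ x z ∧ φ z y) ↔ ∃ z, φ x z ∧ θ z y

/-- Congruence distributivity for all members of a class. -/
def CongDistributiveClass (K : Set (Alg L)) : Prop :=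
  ∀ A : Alg L, A ∈ K → ∀ θ φ ψ : A.carrier → A.carrier → Prop,
    IsCongruenceOn A θ → IsCongruenceOn A φ → IsCongruenceOn A ψ →
      ∀ x y : A.carrier,
        (θ x y ∧ congJoin A φ ψ x y) ↔
          congJoin A (fun a b => θ a b ∧ φ a b) (fun a b => θ a b ∧ ψ a b) x y

/-- The congruence extension property. -/
def HasCEP (K : Set (Alg L)) : Prop :=
  ∀ A B : Alg L, A ∈ K → B ∈ K → ∀ e : A.carrier ↪[L] B.carrier,
    ∀ θ : A.carrier → A.carrier → Prop, IsCongruenceOn A θ →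
      ∃ ρ : B.carrier → B.carrier → Prop, IsCongruenceOn B ρ ∧
        ∀ x y : A.carrier, θ x y ↔ ρ (e x) (e y)

/-- The language consisting of one new function symbol `gᵢ` of arity `ar i` for each `i`. -/
def newLang {ι : Type u} (ar : ι → ℕ) : FirstOrder.Language.{u, u} where
  Functions := fun n => { i : ι // ar i = n }
  Relations := fun _ => PEmpty

/-- The `L`-reduct of an algebra in an expanded language `L.sum N`. -/
def algReduct {N : FirstOrder.Language.{u, u}} (B : Alg (L.sum N)) : Alg L where
  carrier := B.carrier
  str := (LHom.sumInl : L →ᴸ L.sum N).reduct B.carrier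

/-- The class `K[L_F]` of expansions of members of `K` on which each operation in the family
`f` is total, interpreting the new symbol `gᵢ` as `f i`. -/
def expClass (K : Set (Alg L)) {ι : Type u} (ar : ι → ℕ)
    (f : ∀ i, PartialFunOn K (ar i)) : Set (Alg (L.sum (newLang ar))) :=
  { B | ∃ hB : algReduct B ∈ K,
      ∀ (i : ι) (x : Fin (ar i) → B.carrier),
        Structure.funMap (L := L.sum (newLang ar)) (M := B.carrier)
            (Sum.inr ⟨i, rfl⟩ : (L.sum (newLang ar)).Functions (ar i)) x
          ∈ f i (algReduct B) hB x }

/-- Closure under subalgebras (and isomorphic copies) inside a fixed language. -/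
def SClosure {L' : FirstOrder.Language.{u, u}} (S : Set (Alg L')) : Set (Alg L') :=
  { A | ∃ B ∈ S, Nonempty (A.carrier ↪[L'] B.carrier) }

/-- Membership in `ext_pp(K)`: an extendable implicit operation defined by a pp formula. -/
def InExtPP {K : Set (Alg L)} {n : ℕ} (f : PartialFunOn K n) : Prop :=
  IsOperationOn f ∧ (∃ φ : L.Formula (Fin (n + 1)), IsPP φ ∧ DefinedBy f φ) ∧ Extendable f

/-- `M` is the pp expansion of `K` induced by the family `f` of extendable pp-definable
implicit operations, with one new symbol of arity `ar i` for each `i`. -/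
def IsPPExpansionVia (K : Set (Alg L)) {ι : Type u} (ar : ι → ℕ)
    (f : ∀ i, PartialFunOn K (ar i)) (M : Set (Alg (L.sum (newLang ar)))) : Prop :=
  (∀ i, 0 < ar i) ∧ (∀ i, InExtPP (f i)) ∧ M = SClosure (expClass K ar f)

/-- Every implicit operation of `K` is interpolated in `M` by a set of terms of the expanded
language. -/
def InterpolatesByTermsInExp (K : Set (Alg L)) {ι : Type u} {ar : ι → ℕ}
    (M : Set (Alg (L.sum (newLang ar)))) : Prop :=
  ∀ n : ℕ, 0 < n → ∀ g : PartialFunOn K n, IsImplicitOp g →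
    ∃ T : Set ((L.sum (newLang ar)).Term (Fin n)),
      ∀ A : Alg (L.sum (newLang ar)), A ∈ M →
        ∀ (hA : algReduct A ∈ K) (x : Fin n → A.carrier) (b : A.carrier),
          b ∈ g (algReduct A) hA x → ∃ t ∈ T, t.realize x = b

/-- `M` is a Beth companion of `K` (via the given expansion datum). -/
def IsBethCompanionVia (K : Set (Alg L)) {ι : Type u} (ar : ι → ℕ)
    (f : ∀ i, PartialFunOn K (ar i)) (M : Set (Alg (L.sum (newLang ar)))) : Prop :=
  IsPPExpansionVia K ar f M ∧ InterpolatesByTermsInExp K M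

/-- A pp expansion is congruence preserving when the `M`-congruences of each member of `M`
coincide with the `K`-congruences of its `L`-reduct. -/
def CongPreserving {N : FirstOrder.Language.{u, u}} (K : Set (Alg L))
    (M : Set (Alg (L.sum N))) : Prop :=
  ∀ A : Alg (L.sum N), A ∈ M → ∀ θ : A.carrier → A.carrier → Prop,
    IsRelCong M A θ ↔ IsRelCong K (algReduct A) θ

/-- Reinterpretation of an `L₁`-algebra as an `L₂`-algebra along a map sending `L₂`-symbols to
`L₁`-terms (both languages are assumed to be purely functional). -/
def reinterpret {L₁ L₂ : FirstOrder.Language.{u, u}} (ρ : ∀ n, L₂.Functions n → L₁.Term (Fin n))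
    (A : Alg L₁) : Alg L₂ where
  carrier := A.carrier
  str :=
    { funMap := fun {k} s x => (ρ k s).realize x
      RelMap := fun {k} _ _ => False }

/-- Two expansions of the same base language `L` are faithfully term equivalent relative to
`L`. -/
def FaithfullyTermEquivRel (L : FirstOrder.Language.{u, u}) {N₁ N₂ : FirstOrder.Language.{u, u}}
    (M₁ : Set (Alg (L.sum N₁))) (M₂ : Set (Alg (L.sum N₂))) : Prop :=
  ∃ (τ : ∀ n, (L.sum N₁).Functions n → (L.sum N₂).Term (Fin n))
    (ρ : ∀ n, (L.sum N₂).Functions n → (L.sum N₁).Term (Fin n)),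
    (∀ (n : ℕ) (s : L.Functions n),
      τ n (Sum.inl s) = Term.func (Sum.inl s : (L.sum N₂).Functions n) Term.var) ∧
    (∀ (n : ℕ) (s : L.Functions n),
      ρ n (Sum.inl s) = Term.func (Sum.inl s : (L.sum N₁).Functions n) Term.var) ∧
    (∀ A : Alg (L.sum N₁), A ∈ M₁ → reinterpret ρ A ∈ M₂) ∧
    (∀ B : Alg (L.sum N₂), B ∈ M₂ → reinterpret τ B ∈ M₁) ∧
    (∀ A : Alg (L.sum N₁), A ∈ M₁ → reinterpret τ (reinterpret ρ A) = A) ∧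
    (∀ B : Alg (L.sum N₂), B ∈ M₂ → reinterpret ρ (reinterpret τ B) = B)

section HelperLemmas

open Filter

theorem term_realize_congr {α : Type*} {M : Type*} [L.Structure M] [DecidableEq α]
    (t : L.Term α) {v w : α → M} (h : ∀ x ∈ t.varFinset, v x = w x) :
    t.realize v = t.realize w := by
  induction t with
  | var i => exact h i (by simp [Term.varFinset])
  | func f ts ih =>
    simp only [Term.realize]
    congr 1
    funext i
    refine ih i fun x hx => h x ?_
    simp only [Term.varFinset, Finset.mem_biUnion, Finset.mem_univ, true_and]
    exact ⟨i, hx⟩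

/-- An elementary class is closed under ultraproducts of nonempty members. -/
theorem uprod_mem {K : Set (Alg L)} (hK : IsElementary K) {ι : Type u} (F : Ultrafilter ι)
    (A : ι → Alg L) (hne : ∀ i, Nonempty (A i).carrier) (hA : ∀ i, A i ∈ K) :
    Alg.uprod F A ∈ K := by
  obtain ⟨T, hT⟩ := hK
  rw [hT]
  intro φ hφ
  refine (Ultraproduct.sentence_realize (u := F) (M := fun i => (A i).carrier) φ).2 ?_
  exact Eventually.of_forall fun i => (hT _).1 (hA i) φ hφ

/-- Satisfaction of a finite system of equations in parameters and auxiliary unknowns. -/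
def SysSat {α : Type} (S : Finset (L.Term (α ⊕ ℕ) × L.Term (α ⊕ ℕ))) (B : Type u)
    [L.Structure B] (x : α → B) : Prop :=
  ∃ w : ℕ → B, ∀ p ∈ S, p.1.realize (Sum.elim x w) = p.2.realize (Sum.elim x w)

theorem step_one_aux [L.IsAlgebraic] {K : Set (Alg L)} (hK : IsElementary K) {α : Type}
    [Nonempty α] (φ : L.Formula α) (hφ : PreservedByHomsOn K φ) (A : Alg L) (hA : A ∈ K)
    (a : α → A.carrier) (ha : φ.Realize a) :
    ∃ S : Finset (L.Term A.carrier × L.Term A.carrier),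
      (∀ p ∈ S, p.1.realize (id : A.carrier → A.carrier) = p.2.realize id) ∧
      ∀ B ∈ K, ∀ v : A.carrier → B.carrier,
        (∀ p ∈ S, p.1.realize v = p.2.realize v) → φ.Realize fun i => v (a i) := by
  classical
  by_contra hcon
  push Not at hcon
  let E := {p : L.Term A.carrier × L.Term A.carrier //
    p.1.realize (id : A.carrier → A.carrier) = p.2.realize id}
  have key : ∀ S : Finset E, ∃ B : Alg L, B ∈ K ∧ ∃ v : A.carrier → B.carrier,
      (∀ p ∈ S, p.1.1.realize v = p.1.2.realize v) ∧ ¬ φ.Realize fun i => v (a i) := by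
    intro S
    obtain ⟨B, hB, v, hv, hn⟩ := hcon (S.image Subtype.val) (by
      intro p hp
      obtain ⟨q, _, rfl⟩ := Finset.mem_image.1 hp
      exact q.2)
    exact ⟨B, hB, v, fun p hp => hv _ (Finset.mem_image_of_mem _ hp), hn⟩
  choose B hB v hv hn using key
  have hne : ∀ S, Nonempty (B S).carrier := fun S => ⟨v S (a (Classical.arbitrary α))⟩
  let F : Ultrafilter (Finset E) := Ultrafilter.of atTop
  have hF : ∀ p : E, ∀ᶠ S in (F : Filter (Finset E)), p ∈ S := by
    intro p
    refine (Ultrafilter.of_le atTop) ?_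
    filter_upwards [eventually_ge_atTop ({p} : Finset E)] with S hS
    exact hS (Finset.mem_singleton_self p)
  have hD := uprod_mem hK F B hne hB
  let h : A.carrier →[L] (Alg.uprod F B).carrier :=
    { toFun := fun x => ((fun S => v S x : ∀ S, (B S).carrier) :
        (F : Filter (Finset E)).Product fun S => (B S).carrier)
      map_fun' := by
        intro k f x
        refine Eq.trans ?_ (Ultraproduct.funMap_cast (u := F) (M := fun S => (B S).carrier) f
          (fun i S => v S (x i))).symm
        refine Quotient.sound' ?_
        let p : E := ⟨(Term.var (Structure.funMap f x), Term.func f fun i => Term.var (x i)), rfl⟩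
        filter_upwards [hF p] with S hS
        exact hv S p hS
      map_rel' := by
        intro k r
        exact isEmptyElim r }
  have h1 := hφ A (Alg.uprod F B) hA hD h a ha
  have h2 := (Ultraproduct.realize_formula_cast (u := F) (M := fun S => (B S).carrier) φ
    (fun i S => v S (a i))).1 h1
  obtain ⟨S, hS⟩ := h2.exists
  exact hn S hS

theorem step_one [L.IsAlgebraic] {K : Set (Alg L)} (hK : IsElementary K) {α : Type}
    [Nonempty α] [Fintype α] (φ : L.Formula α) (hφ : PreservedByHomsOn K φ) (A : Alg L)
    (hA : A ∈ K) (a : α → A.carrier) (ha : φ.Realize a) :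
    ∃ S : Finset (L.Term (α ⊕ ℕ) × L.Term (α ⊕ ℕ)), SysSat S A.carrier a ∧
      ∀ B ∈ K, ∀ x : α → B.carrier, SysSat S B.carrier x → φ.Realize x := by
  classical
  obtain ⟨S, hS, hSB⟩ := step_one_aux hK φ hφ A hA a ha
  let V : Finset A.carrier :=
    (S.biUnion fun p => p.1.varFinset ∪ p.2.varFinset) ∪ Finset.univ.image a
  obtain ⟨g, s, hgs⟩ : ∃ (g : A.carrier → ℕ) (s : ℕ → A.carrier), ∀ x ∈ V, s (g x) = x := by
    have : Nonempty A.carrier := ⟨a (Classical.arbitrary α)⟩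
    let e := V.equivFin
    let g : A.carrier → ℕ := fun x => if h : x ∈ V then (e ⟨x, h⟩ : ℕ) else 0
    have hg : Set.InjOn g V := by
      intro x hx y hy hxy
      have hx' : x ∈ V := hx
      have hy' : y ∈ V := hy
      simp only [g, hx', hy', dif_pos] at hxy
      have := e.injective (Fin.ext hxy)
      exact congrArg Subtype.val this
    exact ⟨g, Function.invFunOn g V, fun x hx => hg.leftInvOn_invFunOn hx⟩
  let r : A.carrier → α ⊕ ℕ := fun x => Sum.inr (g x)
  refine ⟨S.image (fun p => (p.1.relabel r, p.2.relabel r)) ∪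
    Finset.univ.image (fun i : α => (Term.var (Sum.inl i), Term.var (Sum.inr (g (a i))))), ?_, ?_⟩
  · refine ⟨s, fun p hp => ?_⟩
    rcases Finset.mem_union.1 hp with hp | hp
    · obtain ⟨q, hq, rfl⟩ := Finset.mem_image.1 hp
      simp only [Term.realize_relabel]
      rw [term_realize_congr q.1 (w := id), term_realize_congr q.2 (w := id)]
      · exact hS q hq
      · intro x hx
        exact hgs x (Finset.mem_union_left _ (Finset.mem_biUnion.2
          ⟨q, hq, Finset.mem_union_right _ hx⟩))
      · intro x hx
        exact hgs x (Finset.mem_union_left _ (Finset.mem_biUnion.2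
          ⟨q, hq, Finset.mem_union_left _ hx⟩))
    · obtain ⟨i, _, rfl⟩ := Finset.mem_image.1 hp
      exact (hgs (a i) (Finset.mem_union_right _
        (Finset.mem_image_of_mem _ (Finset.mem_univ i)))).symm
  · rintro B hB x ⟨w, hw⟩
    have h1 := hSB B hB (fun y => w (g y)) (by
      intro p hp
      have := hw _ (Finset.mem_union_left _ (Finset.mem_image_of_mem _ hp))
      simp only [Term.realize_relabel] at this
      exact this)
    have h2 : (fun i => w (g (a i))) = x := by
      funext i
      exact (hw _ (Finset.mem_union_right _
        (Finset.mem_image_of_mem _ (Finset.mem_univ i)))).symm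
    rwa [h2] at h1

theorem exists_conj {α : Type} {k : ℕ}
    (S : Finset (L.Term (α ⊕ Fin k) × L.Term (α ⊕ Fin k))) :
    ∃ χ : L.BoundedFormula α k, IsPosQF χ ∧ ∀ (B : Alg L) (x : α → B.carrier)
      (w : Fin k → B.carrier), χ.Realize x w ↔
        ∀ p ∈ S, p.1.realize (Sum.elim x w) = p.2.realize (Sum.elim x w) := by
  classical
  induction S using Finset.induction_on with
  | empty => exact ⟨⊤, IsPosQF.top, by simp⟩
  | insert p S _ ih =>
    obtain ⟨χ, h1, h2⟩ := ih
    refine ⟨BoundedFormula.equal p.1 p.2 ⊓ χ, (IsPosQF.equal _ _).inf h1, fun B x w => ?_⟩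
    rw [BoundedFormula.realize_inf, h2, Finset.forall_mem_insert]
    rfl

theorem exists_disj {α : Type} {k : ℕ} {ι : Type u} (F : Finset ι)
    (S : ι → Finset (L.Term (α ⊕ Fin k) × L.Term (α ⊕ Fin k))) :
    ∃ χ : L.BoundedFormula α k, IsPosQF χ ∧ ∀ (B : Alg L) (x : α → B.carrier)
      (w : Fin k → B.carrier), χ.Realize x w ↔ ∃ j ∈ F,
        ∀ p ∈ S j, p.1.realize (Sum.elim x w) = p.2.realize (Sum.elim x w) := by
  classical
  induction F using Finset.induction_on with
  | empty => exact ⟨⊥, IsPosQF.falsum, by simp⟩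
  | insert j F _ ih =>
    obtain ⟨χ, h1, h2⟩ := ih
    obtain ⟨χ', h1', h2'⟩ := exists_conj (S j)
    refine ⟨χ' ⊔ χ, h1'.sup h1, fun B x w => ?_⟩
    rw [BoundedFormula.realize_sup, h2, h2', Finset.exists_mem_insert]

theorem isExistPos_exs {α : Type} {k : ℕ} (χ : L.BoundedFormula α k) (h : IsExistPos χ) :
    IsExistPos χ.exs := by
  induction k with
  | zero => exact h
  | succ k ih => exact ih _ h.ex

/-- A finite disjunction of finite systems is expressed by an existential positive formula. -/
theorem exists_existPos {α : Type} [Nonempty α]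
    (F : Finset (Finset (L.Term (α ⊕ ℕ) × L.Term (α ⊕ ℕ)))) :
    ∃ ψ : L.Formula α, IsExistPos ψ ∧ ∀ (B : Alg L) (x : α → B.carrier),
      ψ.Realize x ↔ ∃ S ∈ F, SysSat S B.carrier x := by
  classical
  let V : Finset (α ⊕ ℕ) := F.biUnion fun S => S.biUnion fun p => p.1.varFinset ∪ p.2.varFinset
  let N : ℕ := V.sup (Sum.elim (fun _ => 0) id)
  let g : α ⊕ ℕ → α ⊕ Fin (N + 1) := Sum.map id (Fin.ofNat (N + 1))
  obtain ⟨χ, h1, h2⟩ := exists_disj F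
    (fun S => S.image fun p => (p.1.relabel g, p.2.relabel g))
  refine ⟨χ.exs, isExistPos_exs χ (IsExistPos.of_posQF h1), fun B x => ?_⟩
  rw [BoundedFormula.realize_exs]
  constructor
  · rintro ⟨w, hw⟩
    obtain ⟨S, hS, hp⟩ := (h2 B x w).1 hw
    refine ⟨S, hS, fun i => w (Fin.ofNat (N + 1) i), fun p hpS => ?_⟩
    have := hp _ (Finset.mem_image_of_mem _ hpS)
    simp only [Term.realize_relabel] at this
    have hc : Sum.elim x w ∘ g = Sum.elim x fun i => w (Fin.ofNat (N + 1) i) := by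
      funext i
      rcases i with i | i <;> rfl
    rwa [hc] at this
  · rintro ⟨S, hS, w, hw⟩
    refine ⟨fun i => w i, (h2 B x _).2 ⟨S, hS, fun p hp => ?_⟩⟩
    obtain ⟨q, hq, rfl⟩ := Finset.mem_image.1 hp
    simp only [Term.realize_relabel]
    have hc : ∀ i ∈ V, (Sum.elim x (fun i : Fin (N + 1) => w i) ∘ g) i = Sum.elim x w i := by
      intro i hi
      rcases i with i | i
      · rfl
      · have hle : i ≤ N := Finset.le_sup (f := Sum.elim (fun _ => 0) id) hi
        have : i % (N + 1) = i := Nat.mod_eq_of_lt (by omega)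
        simp [g, Fin.ofNat, this]
    rw [term_realize_congr q.1 (w := Sum.elim x w), term_realize_congr q.2 (w := Sum.elim x w)]
    · exact hw q hq
    · intro i hi
      exact hc i (Finset.mem_biUnion.2 ⟨S, hS, Finset.mem_biUnion.2
        ⟨q, hq, Finset.mem_union_right _ hi⟩⟩)
    · intro i hi
      exact hc i (Finset.mem_biUnion.2 ⟨S, hS, Finset.mem_biUnion.2
        ⟨q, hq, Finset.mem_union_left _ hi⟩⟩)

/-- Homomorphism preservation theorem relative to an elementary class. -/
theorem hom_preservation [L.IsAlgebraic] {K : Set (Alg L)} (hK : IsElementary K) {α : Type}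
    [Nonempty α] [Fintype α] (φ : L.Formula α) (hφ : PreservedByHomsOn K φ) :
    ∃ ψ : L.Formula α, IsExistPos ψ ∧ EquivOn K φ ψ := by
  classical
  let E := {S : Finset (L.Term (α ⊕ ℕ) × L.Term (α ⊕ ℕ)) //
    ∀ B ∈ K, ∀ x : α → B.carrier, SysSat S B.carrier x → φ.Realize x}
  suffices hs : ∃ F : Finset E, ∀ A ∈ K, ∀ a : α → A.carrier, φ.Realize a →
      ∃ S ∈ F, SysSat S.1 A.carrier a by
    obtain ⟨F, hF⟩ := hs
    obtain ⟨ψ, h1, h2⟩ := exists_existPos (F.image Subtype.val)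
    refine ⟨ψ, h1, fun A hA x => ?_⟩
    rw [h2]
    constructor
    · intro h
      obtain ⟨S, hS, h⟩ := hF A hA x h
      exact ⟨S.1, Finset.mem_image_of_mem _ hS, h⟩
    · rintro ⟨S, hS, h⟩
      obtain ⟨S, _, rfl⟩ := Finset.mem_image.1 hS
      exact S.2 A hA x h
  by_contra hcon
  push Not at hcon
  choose A hA a ha hna using hcon
  have hne : ∀ S, Nonempty (A S).carrier := fun S => ⟨a S (Classical.arbitrary α)⟩
  let F : Ultrafilter (Finset E) := Ultrafilter.of atTop
  have hF : ∀ p : E, ∀ᶠ S in (F : Filter (Finset E)), p ∈ S := by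
    intro p
    refine (Ultrafilter.of_le atTop) ?_
    filter_upwards [eventually_ge_atTop ({p} : Finset E)] with S hS
    exact hS (Finset.mem_singleton_self p)
  have hD := uprod_mem hK F A hne hA
  let d : α → (Alg.uprod F A).carrier := fun i => ((fun S => a S i : ∀ S, (A S).carrier) :
        (F : Filter (Finset E)).Product fun S => (A S).carrier)
  have hd : φ.Realize d := (Ultraproduct.realize_formula_cast (u := F)
    (M := fun S => (A S).carrier) φ (fun i S => a S i)).2 (Eventually.of_forall ha)
  obtain ⟨S, hS, hSB⟩ := step_one hK φ hφ _ hD d hd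
  obtain ⟨ψ, -, hψ⟩ := exists_existPos ({S} : Finset _)
  have h3 : ψ.Realize d := (hψ _ d).2 ⟨S, Finset.mem_singleton_self S, hS⟩
  have h4 := (Ultraproduct.realize_formula_cast (u := F)
    (M := fun S => (A S).carrier) ψ (fun i S => a S i)).1 h3
  obtain ⟨G, hG1, hG2⟩ := (h4.and (hF ⟨S, hSB⟩)).exists
  obtain ⟨S', hS', hG3⟩ := (hψ (A G) (a G)).1 hG1
  rw [Finset.mem_singleton] at hS'
  subst hS'
  exact hna G _ hG2 hG3

theorem posQF_preserved {α : Type} {k : ℕ} {φ : L.BoundedFormula α k} (hφ : IsPosQF φ)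
    {A B : Alg L} (h : A.carrier →[L] B.carrier) (x : α → A.carrier) (w : Fin k → A.carrier)
    (hx : φ.Realize x w) : φ.Realize (h ∘ x) (h ∘ w) := by
  induction hφ with
  | falsum => exact hx
  | top => simp
  | equal t₁ t₂ =>
    simp only [BoundedFormula.Realize, ← Sum.comp_elim, HomClass.realize_term] at hx ⊢
    rw [hx]
  | inf _ _ ih1 ih2 =>
    rw [BoundedFormula.realize_inf] at hx ⊢
    exact ⟨ih1 hx.1, ih2 hx.2⟩
  | sup _ _ ih1 ih2 =>
    rw [BoundedFormula.realize_sup] at hx ⊢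
    exact hx.imp ih1 ih2

theorem existPos_preserved {α : Type} {k : ℕ} {φ : L.BoundedFormula α k} (hφ : IsExistPos φ)
    {A B : Alg L} (h : A.carrier →[L] B.carrier) (x : α → A.carrier) (w : Fin k → A.carrier)
    (hx : φ.Realize x w) : φ.Realize (h ∘ x) (h ∘ w) := by
  induction hφ with
  | of_posQF h0 => exact posQF_preserved h0 h x w hx
  | ex _ ih =>
    rw [BoundedFormula.realize_ex] at hx ⊢
    obtain ⟨b, hb⟩ := hx
    refine ⟨h b, ?_⟩
    rw [← Fin.comp_snoc]
    exact ih _ hb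

end HelperLemmas

/-- Let `K` be an elementary class of algebras (in a purely functional
language). A partial function `f` on `K` is an implicit operation of `K` if and only if `f` is
defined by an existential positive formula. -/
theorem statement_0 {L : FirstOrder.Language.{u, u}} [L.IsAlgebraic]
    {K : Set (Alg L)} (hK : IsElementary K) {n : ℕ} (hn : 0 < n)
    (f : PartialFunOn K n) :
    IsImplicitOp f ↔ ∃ φ : L.Formula (Fin (n + 1)), IsExistPos φ ∧ DefinedBy f φ := by
  constructor
  · rintro ⟨⟨φ, hφ⟩, hop⟩
    have hpres : PreservedByHomsOn K φ := by
      intro A B hA hB h x hx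
      have e1 : Fin.snoc (Fin.init x) (x (Fin.last n)) = x := Fin.snoc_init_self x
      rw [← e1] at hx
      have h1 := hop A B hA hB h _ _ ((hφ A hA _ _).2 hx)
      have h2 := (hφ B hB _ _).1 h1
      have e2 : Fin.snoc (fun i => h (Fin.init x i)) (h (x (Fin.last n))) =
          fun i => h (x i) := Fin.snoc_init_self fun i => h (x i)
      rwa [e2] at h2
    obtain ⟨ψ, h1, h2⟩ := hom_preservation hK φ hpres
    exact ⟨ψ, h1, fun A hA x b => (hφ A hA x b).trans (h2 A hA _)⟩
  · rintro ⟨φ, hpos, hφ⟩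
    refine ⟨⟨φ, hφ⟩, fun A B hA hB h x b hb => ?_⟩
    rw [hφ] at hb ⊢
    have h1 := existPos_preserved hpos h _ _ hb
    rw [Fin.comp_snoc] at h1
    have e : (h ∘ (default : Fin 0 → A.carrier)) = default := Subsingleton.elim _ _
    rw [e] at h1
    exact h1

end Impl
end

section
/- Let K be an elementary class of algebras closed under direct products, and let φ be a first-order formula that is preserved by homomorphisms in K and preserved by direct products in K. Then φ is equivalent in K to a primitive positive formula. -/
namespace Impl

open FirstOrder Language

universe u v

variable {L : FirstOrder.Language.{u, u}}

/-- Finite conjunctions of equations exist. -/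
theorem exists_conjEq {L : FirstOrder.Language.{u, u}} {α : Type} {k : ℕ} {ι : Type u}
    (s : Finset ι) (t₁ t₂ : ι → L.Term (α ⊕ Fin k)) :
    ∃ ψ : L.BoundedFormula α k, IsConjEq ψ ∧
      ∀ (M : Type u) [L.Structure M] (v : α → M) (xs : Fin k → M),
        ψ.Realize v xs ↔
          ∀ i ∈ s, (t₁ i).realize (Sum.elim v xs) = (t₂ i).realize (Sum.elim v xs) := by
  classical
  induction s using Finset.induction_on with
  | empty => exact ⟨⊤, IsConjEq.top, by intros; simp⟩
  | insert i s _ ih =>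
    obtain ⟨ψ, hψ, h⟩ := ih
    refine ⟨BoundedFormula.equal (t₁ i) (t₂ i) ⊓ ψ, IsConjEq.inf (IsConjEq.equal _ _) hψ, ?_⟩
    intro M _ v xs
    rw [BoundedFormula.realize_inf, h M v xs, Finset.forall_mem_insert]
    rfl

theorem isPP_exs {L : FirstOrder.Language.{u, u}} {α : Type} {k : ℕ}
    {ψ : L.BoundedFormula α k} (h : IsPP ψ) : IsPP (BoundedFormula.exs ψ : L.Formula α) := by
  induction k with
  | zero => exact h
  | succ k ih => exact ih (IsPP.ex h)

theorem IsConjEq.hom {L : FirstOrder.Language.{u, u}} {α : Type} {k : ℕ}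
    {ψ : L.BoundedFormula α k} (h : IsConjEq ψ) {M N : Type u} [L.Structure M] [L.Structure N]
    (g : M →[L] N) (v : α → M) (xs : Fin k → M) (hr : ψ.Realize v xs) :
    ψ.Realize (g ∘ v) (g ∘ xs) := by
  induction h with
  | top => simp
  | equal t₁ t₂ =>
    change (t₁.realize _ = t₂.realize _) at hr
    change (t₁.realize _ = t₂.realize _)
    rw [← Sum.comp_elim, HomClass.realize_term, HomClass.realize_term, hr]
  | inf _ _ ih₁ ih₂ =>
    rw [BoundedFormula.realize_inf] at hr ⊢
    exact ⟨ih₁ hr.1, ih₂ hr.2⟩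

theorem IsPP.hom {L : FirstOrder.Language.{u, u}} {α : Type} {k : ℕ}
    {ψ : L.BoundedFormula α k} (h : IsPP ψ) {M N : Type u} [L.Structure M] [L.Structure N]
    (g : M →[L] N) (v : α → M) (xs : Fin k → M) (hr : ψ.Realize v xs) :
    ψ.Realize (g ∘ v) (g ∘ xs) := by
  induction h with
  | of_conjEq h => exact h.hom g v xs hr
  | ex _ ih =>
    rw [BoundedFormula.realize_ex] at hr ⊢
    obtain ⟨a, ha⟩ := hr
    refine ⟨g a, ?_⟩
    have := ih _ ha
    rwa [Fin.comp_snoc] at this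

/-- Projection from a product. -/
def projHom {L : FirstOrder.Language.{u, u}} {ι : Type u} (A : ι → Alg L) (i : ι) :
    (Alg.pi A).carrier →[L] (A i).carrier where
  toFun x := x i
  map_fun' _ _ := rfl
  map_rel' _ _ h := h i

/-- The pp formula describing finitely many values of the operations around a tuple `a`. -/
theorem exists_diagram {L : FirstOrder.Language.{u, u}} {m : ℕ} (A : Alg L) [Nonempty A.carrier]
    (a : Fin m → A.carrier) (s : Finset (Σ n, L.Functions n × (Fin n → A.carrier))) :
    ∃ ψ : L.Formula (Fin m), IsPP ψ ∧ ψ.Realize a ∧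
      ∀ (B : Alg L) (b : Fin m → B.carrier), ψ.Realize b →
        ∃ g : A.carrier → B.carrier, (∀ i, g (a i) = b i) ∧
          ∀ c ∈ s, g (Structure.funMap c.2.1 c.2.2) =
            Structure.funMap c.2.1 fun j => g (c.2.2 j) := by
  classical
  obtain ⟨p⟩ := ‹Nonempty A.carrier›
  let F : Finset A.carrier := insert p (Finset.univ.image a ∪
    s.biUnion fun c => insert (Structure.funMap c.2.1 c.2.2) (Finset.univ.image c.2.2))
  have hp : p ∈ F := Finset.mem_insert_self _ _
  have ha : ∀ i, a i ∈ F := fun i => by simp [F]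
  have hc₁ : ∀ c ∈ s, Structure.funMap c.2.1 c.2.2 ∈ F := fun c hc => by
    refine Finset.mem_insert_of_mem (Finset.mem_union_right _ (Finset.mem_biUnion.2 ⟨c, hc, ?_⟩))
    exact Finset.mem_insert_self _ _
  have hc₂ : ∀ c ∈ s, ∀ j, c.2.2 j ∈ F := fun c hc j => by
    refine Finset.mem_insert_of_mem (Finset.mem_union_right _ (Finset.mem_biUnion.2 ⟨c, hc, ?_⟩))
    exact Finset.mem_insert_of_mem (Finset.mem_image_of_mem _ (Finset.mem_univ _))
  let e := F.equivFin
  let idx : A.carrier → Fin F.card := fun x => if h : x ∈ F then e ⟨x, h⟩ else e ⟨p, hp⟩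
  have hidx : ∀ x ∈ F, ((e.symm (idx x) : F) : A.carrier) = x := fun x hx => by simp [idx, hx]
  let tv : A.carrier → L.Term (Fin m ⊕ Fin F.card) := fun x => Term.var (Sum.inr (idx x))
  obtain ⟨ψ₁, h₁, r₁⟩ := exists_conjEq (L := L) (α := Fin m) (k := F.card)
    (Finset.univ : Finset (ULift.{u} (Fin m)))
    (fun i => tv (a i.down)) (fun i => Term.var (Sum.inl i.down))
  obtain ⟨ψ₂, h₂, r₂⟩ := exists_conjEq (L := L) (α := Fin m) (k := F.card) s
    (fun c => tv (Structure.funMap c.2.1 c.2.2)) (fun c => Term.func c.2.1 fun j => tv (c.2.2 j))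
  refine ⟨(ψ₁ ⊓ ψ₂).exs, isPP_exs (IsPP.of_conjEq (h₁.inf h₂)), ?_, ?_⟩
  · refine BoundedFormula.realize_exs.2 ⟨fun i => (e.symm i : F), ?_⟩
    rw [BoundedFormula.realize_inf, r₁, r₂]
    constructor
    · intro i _
      simp [tv, hidx _ (ha _)]
    · intro c hc
      simp only [tv, Term.realize_var, Term.realize_func, Sum.elim_inr]
      rw [hidx _ (hc₁ c hc)]
      congr 1
      funext j
      rw [hidx _ (hc₂ c hc j)]
  · intro B b hb
    obtain ⟨xs, hxs⟩ := BoundedFormula.realize_exs.1 hb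
    rw [BoundedFormula.realize_inf, r₁, r₂] at hxs
    refine ⟨fun x => xs (idx x), fun i => ?_, fun c hc => ?_⟩
    · simpa [tv] using hxs.1 ⟨i⟩ (Finset.mem_univ _)
    · simpa [tv] using hxs.2 c hc

/-- Let `K` be an elementary class of algebras closed under direct products,
and let `φ` be a first-order formula preserved by homomorphisms and by direct products in `K`.
Then `φ` is equivalent in `K` to a primitive positive formula. -/
theorem statement_1 {L : FirstOrder.Language.{u, u}} [L.IsAlgebraic]
    {K : Set (Alg L)} (hK : IsElementary K) (hP : ClosedUnderProd K)
    {m : ℕ} (φ : L.Formula (Fin m))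
    (hhom : PreservedByHomsOn K φ) (hprod : PreservedByProdsOn K φ) :
    ∃ ψ : L.Formula (Fin m), IsPP ψ ∧ EquivOn K φ ψ := by
  classical
  -- a product `A` with a tuple `a` of minimal pp type among those satisfying `φ`
  obtain ⟨A, hA, a, hφa, hmin⟩ : ∃ A ∈ K, ∃ a : Fin m → A.carrier, φ.Realize a ∧
      ∀ ψ : L.Formula (Fin m), IsPP ψ → ψ.Realize a →
        ∀ B ∈ K, ∀ b : Fin m → B.carrier, φ.Realize b → ψ.Realize b := by
    let J : Type u := { ψ : L.Formula (Fin m) // IsPP ψ ∧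
      ∃ B ∈ K, ∃ b : Fin m → B.carrier, φ.Realize b ∧ ¬ ψ.Realize b }
    have hJ : ∀ j : J, ∃ B ∈ K, ∃ b : Fin m → B.carrier, φ.Realize b ∧ ¬ j.1.Realize b :=
      fun j => j.2.2
    choose A hA a hφ hψ using hJ
    refine ⟨Alg.pi A, hP J A hA, fun i j => a j i, hprod J A hA _ hφ, ?_⟩
    intro ψ hpp hr B hB b hb
    by_contra hn
    let j : J := ⟨ψ, hpp, B, hB, b, hb, hn⟩
    apply hψ j
    have := hpp.hom (projHom A j) _ _ hr
    rw [Formula.Realize]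
    convert this
    rfl
  rcases isEmpty_or_nonempty A.carrier with hE | hE
  · refine ⟨⊤, IsPP.of_conjEq IsConjEq.top, fun B hB x => ?_⟩
    let h : A.carrier →[L] B.carrier :=
      { toFun := fun y => hE.elim y
        map_fun' := fun f v => hE.elim (Structure.funMap f v)
        map_rel' := fun r => isEmptyElim r }
    have := hhom A B hA hB h a hφa
    have hx : (fun i => h (a i)) = x := funext fun i => hE.elim (a i)
    rw [hx] at this
    simp [this]
  by_contra hno
  push Not at hno
  have key : ∀ s : Finset (Σ n, L.Functions n × (Fin n → A.carrier)),
      ∃ B ∈ K, ∃ b : Fin m → B.carrier, ¬ φ.Realize b ∧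
        ∃ g : A.carrier → B.carrier, (∀ i, g (a i) = b i) ∧
          ∀ c ∈ s, g (Structure.funMap c.2.1 c.2.2) =
            Structure.funMap c.2.1 fun j => g (c.2.2 j) := by
    intro s
    obtain ⟨ψ, hpp, hr, hext⟩ := exists_diagram A a s
    by_contra hcon
    refine hno ψ hpp fun B hB b => ⟨hmin ψ hpp hr B hB b, fun hb => ?_⟩
    by_contra hn
    exact hcon ⟨B, hB, b, hn, hext B b hb⟩
  choose B hB b hb g hga hgc using key
  let U : Ultrafilter (Finset (Σ n, L.Functions n × (Fin n → A.carrier))) :=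
    Ultrafilter.of Filter.atTop
  have hU : U.toFilter ≤ Filter.atTop := Ultrafilter.of_le _
  haveI : ∀ s, Nonempty (B s).carrier := fun s => hE.map (g s)
  have hBU : Alg.uprod U B ∈ K := by
    obtain ⟨T, hT⟩ := hK
    rw [hT]
    intro θ hθ
    refine (Ultraproduct.sentence_realize (M := fun s => (B s).carrier) (u := U) θ).2 ?_
    exact Filter.Eventually.of_forall fun s => (hT _).1 (hB s) θ hθ
  let h : A.carrier →[L] (Alg.uprod U B).carrier :=
    { toFun := fun x =>
        Quotient.mk' (s := U.toFilter.productSetoid fun s => (B s).carrier) fun s => g s x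
      map_fun' := by
        intro n f v
        refine Eq.trans ?_ (Ultraproduct.funMap_cast (M := fun s => (B s).carrier) (u := U) f
          (fun j s => g s (v j))).symm
        refine Quotient.sound' ?_
        have : ∀ᶠ s in U.toFilter,
            (⟨n, f, v⟩ : Σ n, L.Functions n × (Fin n → A.carrier)) ∈ s := by
          refine hU ((Filter.eventually_ge_atTop {⟨n, f, v⟩}).mono fun s hs => ?_)
          exact hs (Finset.mem_singleton_self _)
        exact this.mono fun s hs => hgc s _ hs
      map_rel' := fun r => isEmptyElim r }
  have h₁ := hhom A _ hA hBU h a hφa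
  have h₂ := (Ultraproduct.realize_formula_cast (M := fun s => (B s).carrier) (u := U) φ
    (fun i s => g s (a i))).1 h₁
  obtain ⟨s, hs⟩ := h₂.exists
  apply hb s
  have : (fun i => g s (a i)) = b s := funext (hga s)
  rwa [this] at hs

end Impl
end

section
/- Let K be a class of algebras and φ(x1,…,xn,y) an existential positive formula that is functional in K. Then φ is functional in the quasivariety Q(K) generated by K, and hence φ defines an implicit operation of Q(K). -/
namespace Impl

open FirstOrder Language

universe u v

variable {L : FirstOrder.Language.{u, u}}

theorem IsPosQF.realize_hom {α : Type v} {k : ℕ} {φ : L.BoundedFormula α k} (hφ : IsPosQF φ)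
    {M N : Type u} [L.Structure M] [L.Structure N] (h : M →[L] N) :
    ∀ (x : α → M) (y : Fin k → M), φ.Realize x y → φ.Realize (h ∘ x) (h ∘ y) := by
  induction hφ with
  | falsum => intro x y hr; exact hr
  | top => intro x y _; exact BoundedFormula.realize_top.2 trivial
  | equal t₁ t₂ =>
    intro x y hr
    change t₁.realize _ = t₂.realize _ at hr
    change t₁.realize _ = t₂.realize _
    rw [← Sum.comp_elim, HomClass.realize_term, HomClass.realize_term, hr]
  | inf _ _ ih₁ ih₂ =>
    intro x y hr
    rw [BoundedFormula.realize_inf] at hr ⊢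
    exact ⟨ih₁ x y hr.1, ih₂ x y hr.2⟩
  | sup _ _ ih₁ ih₂ =>
    intro x y hr
    rw [BoundedFormula.realize_sup] at hr ⊢
    exact hr.imp (ih₁ x y) (ih₂ x y)

theorem IsExistPos.realize_hom {α : Type v} {k : ℕ} {φ : L.BoundedFormula α k}
    (hφ : IsExistPos φ) {M N : Type u} [L.Structure M] [L.Structure N] (h : M →[L] N) :
    ∀ (x : α → M) (y : Fin k → M), φ.Realize x y → φ.Realize (h ∘ x) (h ∘ y) := by
  induction hφ with
  | of_posQF hq => exact hq.realize_hom h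
  | ex _ ih =>
    intro x y hr
    rw [BoundedFormula.realize_ex] at hr ⊢
    obtain ⟨a, ha⟩ := hr
    refine ⟨h a, ?_⟩
    rw [← Fin.comp_snoc]
    exact ih x _ ha

theorem IsExistPos.realize_snoc_hom {n : ℕ} {φ : L.Formula (Fin (n + 1))}
    (hφ : IsExistPos φ) {M N : Type u} [L.Structure M] [L.Structure N] (h : M →[L] N)
    (x : Fin n → M) (b : M) (hr : φ.Realize (Fin.snoc x b : Fin (n + 1) → M)) :
    φ.Realize (Fin.snoc (fun i => h (x i)) (h b) : Fin (n + 1) → N) := by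
  have := IsExistPos.realize_hom hφ h _ _ hr
  rw [Fin.comp_snoc] at this
  rw [Formula.Realize]
  rw [Subsingleton.elim (h ∘ default) default] at this
  exact this

/-- The projection homomorphism from a product. -/
def piProj {ι : Type u} (A : ι → Alg L) (i : ι) : (Alg.pi A).carrier →[L] (A i).carrier where
  toFun x := x i
  map_fun' := fun _ _ => rfl
  map_rel' := fun _ _ h => h i

theorem functional_uprod {n : ℕ} (φ : L.Formula (Fin (n + 1))) {ι : Type u}
    (F : Ultrafilter ι) (A : ι → Alg L)
    (hA : ∀ i (x : Fin n → (A i).carrier) (b₁ b₂ : (A i).carrier),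
      φ.Realize (Fin.snoc x b₁ : Fin (n + 1) → (A i).carrier) →
      φ.Realize (Fin.snoc x b₂ : Fin (n + 1) → (A i).carrier) → b₁ = b₂)
    (x : Fin n → Filter.Product (F : Filter ι) fun i => (A i).carrier)
    (b₁ b₂ : Filter.Product (F : Filter ι) fun i => (A i).carrier)
    (h₁ : φ.Realize (Fin.snoc x b₁ :
      Fin (n + 1) → Filter.Product (F : Filter ι) fun i => (A i).carrier))
    (h₂ : φ.Realize (Fin.snoc x b₂ :
      Fin (n + 1) → Filter.Product (F : Filter ι) fun i => (A i).carrier)) : b₁ = b₂ := by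
  obtain ⟨c₁, rfl⟩ := Quotient.exists_rep b₁
  obtain ⟨c₂, rfl⟩ := Quotient.exists_rep b₂
  choose y hy using fun i => Quotient.exists_rep (x i)
  obtain rfl : (fun i => Quotient.mk _ (y i)) = x := funext hy
  haveI : ∀ i, Nonempty (A i).carrier := fun i => ⟨c₁ i⟩
  have key : ∀ c : ∀ i, (A i).carrier,
      φ.Realize (Fin.snoc (fun i => Quotient.mk _ (y i)) (Quotient.mk _ c) :
        Fin (n + 1) → Filter.Product (F : Filter ι) fun i => (A i).carrier) →
      ∀ᶠ i in (F : Filter ι),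
        φ.Realize (Fin.snoc (fun j => y j i) (c i) : Fin (n + 1) → (A i).carrier) := by
    intro c hc
    have e : (Fin.snoc (fun i => Quotient.mk _ (y i)) (Quotient.mk _ c) :
        Fin (n + 1) → Filter.Product (F : Filter ι) fun i => (A i).carrier) =
        fun j => Quotient.mk _
          ((Fin.snoc y c : Fin (n + 1) → ∀ i, (A i).carrier) j) := by
      funext j
      refine Fin.lastCases ?_ (fun j => ?_) j
      · rw [Fin.snoc_last]
        exact Fin.snoc_last (α := fun _ => Filter.Product (F : Filter ι) fun i => (A i).carrier) _ _
      · rw [Fin.snoc_castSucc]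
        exact Fin.snoc_castSucc
          (α := fun _ => Filter.Product (F : Filter ι) fun i => (A i).carrier) _ _ _
    rw [e] at hc
    have hc' := (Ultraproduct.realize_formula_cast (u := F) φ
      (Fin.snoc y c : Fin (n + 1) → ∀ i, (A i).carrier)).1 hc
    filter_upwards [hc'] with i hi
    convert hi using 1
    funext j
    refine Fin.lastCases ?_ (fun j => ?_) j <;> simp
  refine Quotient.sound ?_
  change ∀ᶠ i in (F : Filter ι), c₁ i = c₂ i
  filter_upwards [key c₁ h₁, key c₂ h₂] with i hi₁ hi₂
  exact hA i _ _ _ hi₁ hi₂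

theorem functionalIn_QGen (K : Set (Alg L)) {n : ℕ} (φ : L.Formula (Fin (n + 1)))
    (hep : IsExistPos φ) (hfun : FunctionalIn K φ) : FunctionalIn (QGen K) φ := by
  intro A hA
  refine hA { B : Alg L | ∀ (x : Fin n → B.carrier) (b₁ b₂ : B.carrier),
    φ.Realize (Fin.snoc x b₁ : Fin (n + 1) → B.carrier) →
    φ.Realize (Fin.snoc x b₂ : Fin (n + 1) → B.carrier) → b₁ = b₂ } ⟨⟨?_, ?_, ?_, ?_⟩, hfun⟩
  · rintro A B hA ⟨e⟩ x b₁ b₂ h₁ h₂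
    exact e.symm.injective (hA _ _ _ (hep.realize_snoc_hom e.symm.toHom x b₁ h₁)
      (hep.realize_snoc_hom e.symm.toHom x b₂ h₂))
  · rintro A B hB ⟨e⟩ x b₁ b₂ h₁ h₂
    exact e.injective (hB _ _ _ (hep.realize_snoc_hom e.toHom x b₁ h₁)
      (hep.realize_snoc_hom e.toHom x b₂ h₂))
  · intro ι A hA x b₁ b₂ h₁ h₂
    funext i
    exact hA i _ _ _ (hep.realize_snoc_hom (piProj A i) x b₁ h₁)
      (hep.realize_snoc_hom (piProj A i) x b₂ h₂)
  · intro ι F A hA x b₁ b₂ h₁ h₂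
    exact functional_uprod φ F A hA x b₁ b₂ h₁ h₂

/-- Let `K` be a class of algebras and `φ(x₁, …, xₙ, y)` an existential
positive formula that is functional in `K`. Then `φ` is functional in the quasivariety `Q(K)`
generated by `K`, and hence `φ` defines an implicit operation of `Q(K)`. -/
theorem statement_2 {L : FirstOrder.Language.{u, u}} [L.IsAlgebraic]
    (K : Set (Alg L)) {n : ℕ} (hn : 0 < n) (φ : L.Formula (Fin (n + 1)))
    (hep : IsExistPos φ) (hfun : FunctionalIn K φ) :
    FunctionalIn (QGen K) φ ∧
      ∃ f : PartialFunOn (QGen K) n, DefinedBy f φ ∧ IsOperationOn f := by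
  have hQ := functionalIn_QGen K φ hep hfun
  classical
  let f : PartialFunOn (QGen K) n := fun A _ x =>
    ⟨∃ b, φ.Realize (Fin.snoc x b : Fin (n + 1) → A.carrier), fun h => h.choose⟩
  have hf : DefinedBy f φ := by
    intro A hA x b
    constructor
    · rintro ⟨h, rfl⟩
      exact h.choose_spec
    · intro h
      have h' : ∃ b, φ.Realize (Fin.snoc x b : Fin (n + 1) → A.carrier) := ⟨b, h⟩
      exact ⟨h', hQ A hA x _ _ h'.choose_spec h⟩
  refine ⟨hQ, f, hf, ?_⟩
  intro A B hA hB h x b hb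
  exact (hf B hB _ _).2 (hep.realize_snoc_hom h x b ((hf A hA x b).1 hb))

end Impl
end

section
/- For every field F and all a, b ∈ F: a²b = a and ab² = b hold if and only if b = wi(a), where the weak inverse wi(a) is a⁻¹ if a ≠ 0 and 0 if a = 0. Consequently the conjunction of equations φ = (x²y ≈ x) ⊓ (xy² ≈ y) is functional in the quasivariety of reduced commutative rings, and it defines a unary implicit operation f of this quasivariety such that f^A is total and coincides with weak inversion on every field A. -/
/-- For every field `F` and all `a, b ∈ F`: `a²b = a` and `ab² = b` hold if
and only if `b` is the weak inverse of `a` (that is, `a⁻¹` if `a ≠ 0`, and `0` if `a = 0`).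
Consequently, the conjunction of equations `φ = (x²y ≈ x) ⊓ (xy² ≈ y)` is functional in the
quasivariety of reduced commutative rings, the partial function it defines is preserved by
homomorphisms of reduced commutative rings (so it is an implicit operation of this
quasivariety), and it is total on every field, where it coincides with weak inversion. -/
theorem statement_4 :
    (∀ (F : Type) [Field F] (a b : F),
      (a ^ 2 * b = a ∧ a * b ^ 2 = b) ↔ ((a ≠ 0 ∧ b = a⁻¹) ∨ (a = 0 ∧ b = 0))) ∧
    (∀ (R : Type) [CommRing R], (∀ x : R, x * x = 0 → x = 0) →
      ∀ a b c : R, a ^ 2 * b = a → a * b ^ 2 = b → a ^ 2 * c = a → a * c ^ 2 = c → b = c) ∧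
    (∀ (R S : Type) [CommRing R] [CommRing S],
      (∀ x : R, x * x = 0 → x = 0) → (∀ x : S, x * x = 0 → x = 0) →
        ∀ (h : R →+* S) (a b : R), a ^ 2 * b = a → a * b ^ 2 = b →
          h a ^ 2 * h b = h a ∧ h a * h b ^ 2 = h b) ∧
    (∀ (F : Type) [Field F] (a : F), ∃ b : F,
      (a ^ 2 * b = a ∧ a * b ^ 2 = b) ∧ ((a ≠ 0 ∧ b = a⁻¹) ∨ (a = 0 ∧ b = 0))) := by
  have key : ∀ (F : Type) [Field F] (a b : F),
      (a ^ 2 * b = a ∧ a * b ^ 2 = b) ↔ ((a ≠ 0 ∧ b = a⁻¹) ∨ (a = 0 ∧ b = 0)) := by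
    intro F _ a b
    constructor
    · rintro ⟨h1, h2⟩
      by_cases ha : a = 0
      · right
        refine ⟨ha, ?_⟩
        rw [← h2, ha, zero_mul]
      · left
        refine ⟨ha, ?_⟩
        apply eq_inv_of_mul_eq_one_right
        apply mul_left_cancel₀ ha
        linear_combination h1
    · rintro (⟨ha, rfl⟩ | ⟨rfl, rfl⟩)
      · constructor <;> field_simp
      · simp
  refine ⟨key, ?_, ?_, ?_⟩
  · intro R _ _ a b c h1 h2 h3 h4
    linear_combination -h2 - b ^ 2 * h3 + b * c * h1 + h4 + c ^ 2 * h1 - b * c * h3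
  · intro R S _ _ _ _ h a b h1 h2
    rw [← map_pow, ← map_pow, ← map_mul, ← map_mul, h1, h2]
    exact ⟨rfl, rfl⟩
  · intro F _ a
    have hb : (a ≠ 0 ∧ a⁻¹ = a⁻¹) ∨ (a = 0 ∧ a⁻¹ = 0) := by
      by_cases ha : a = 0
      · right
        simp [ha]
      · left
        exact ⟨ha, rfl⟩
    exact ⟨a⁻¹, (key F a a⁻¹).2 hb, hb⟩
end

section
/- For all integers a, b: b = |a| if and only if there exist integers z1, z2, z3, z4 with b = z1² + z2² + z3² + z4² and a² = b². Moreover, the absolute value on ℤ is not definable by a conjunction of equations: there is no finite family of polynomials p1(x,y), …, pn(x,y) with integer coefficients such that for all a, b ∈ ℤ one has (pi(a,b) = 0 for every i ≤ n) if and only if b = |a|. -/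
/-- For all integers `a, b`: `b = |a|` if and only if there exist integers
`z₁, z₂, z₃, z₄` with `b = z₁² + z₂² + z₃² + z₄²` and `a² = b²`. Moreover, the absolute value
on `ℤ` is not definable by a (finite) conjunction of equations: there is no finite family of
polynomials `p₁(x,y), …, pₙ(x,y)` with integer coefficients such that for all `a, b ∈ ℤ` one
has `pᵢ(a,b) = 0` for every `i ≤ n` if and only if `b = |a|`. -/
theorem statement_5 :
    (∀ a b : ℤ, b = |a| ↔
      ∃ z₁ z₂ z₃ z₄ : ℤ, b = z₁ ^ 2 + z₂ ^ 2 + z₃ ^ 2 + z₄ ^ 2 ∧ a ^ 2 = b ^ 2) ∧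
    ¬ ∃ (n : ℕ) (p : Fin n → MvPolynomial (Fin 2) ℤ),
        ∀ a b : ℤ, (∀ i, MvPolynomial.eval ![a, b] (p i) = 0) ↔ b = |a| := by
  refine ⟨fun a b => ⟨fun h => ?_, ?_⟩, ?_⟩
  · obtain ⟨x, y, z, w, hn⟩ := Nat.sum_four_squares a.natAbs
    refine ⟨x, y, z, w, ?_, ?_⟩
    · rw [h, Int.abs_eq_natAbs, ← hn]
      push_cast
      ring
    · rw [h, sq_abs]
  · rintro ⟨x, y, z, w, hb, hab⟩
    have hb0 : 0 ≤ b := by rw [hb]; positivity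
    rw [← abs_of_nonneg hb0]
    exact (sq_eq_sq_iff_abs_eq_abs b a).1 hab.symm
  · rintro ⟨n, p, h⟩
    have key : ∀ i (t : ℤ), Polynomial.eval t
        (MvPolynomial.aeval (fun _ => (Polynomial.X : Polynomial ℤ)) (p i)) =
        MvPolynomial.eval ![t, t] (p i) := by
      intro i t
      induction p i using MvPolynomial.induction_on with
      | C c => simp
      | add q r hq hr => simp [hq, hr]
      | mul_X q j hq => fin_cases j <;> simp [hq]
    have hz : ∀ i, MvPolynomial.aeval (fun _ => (Polynomial.X : Polynomial ℤ)) (p i) = 0 := by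
      intro i
      apply Polynomial.eq_zero_of_infinite_isRoot
      refine (Set.Ici_infinite (0 : ℤ)).mono ?_
      intro t ht
      have ht0 : (0 : ℤ) ≤ t := ht
      change Polynomial.eval t _ = 0
      rw [key]
      exact (h t t).2 (abs_of_nonneg ht0).symm i
    have := (h (-1) (-1)).1 (fun i => by rw [← key, hz]; simp)
    norm_num at this
end

section
/- Let K be a class of algebras closed under finite direct products that has the amalgamation property, and let A ≤ B ≤ C be algebras with B, C ∈ K. Then the dominion of A in B relative to K equals the intersection of the dominion of A in C relative to K with B, i.e., d_K(A,B) = d_K(A,C) ∩ B. -/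
namespace Impl

open FirstOrder Language

universe u v

variable {L : FirstOrder.Language.{u, u}}

/-- The embedding `x ↦ (x, g x)` into a two-element product. -/
def graphEmb {L : FirstOrder.Language.{u, u}} [L.IsAlgebraic] (B D : Alg L)
    (g : B.carrier →[L] D.carrier) :
    B.carrier ↪[L] (Alg.pi (fun i : ULift.{u} Bool => bif i.down then B else D)).carrier where
  toFun x := fun i => match i with
    | ⟨true⟩ => x
    | ⟨false⟩ => g x
  inj' x y h := congrFun h ⟨true⟩
  map_fun' {n} f x := by
    funext i
    rcases i with ⟨_ | _⟩
    · exact g.map_fun f x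
    · rfl
  map_rel' {n} r x := isEmptyElim r

theorem graphEmb_eq_iff {L : FirstOrder.Language.{u, u}} [L.IsAlgebraic] (B D : Alg L)
    (g h : B.carrier →[L] D.carrier) (x : B.carrier) :
    graphEmb B D g x = graphEmb B D h x ↔ g x = h x := by
  constructor
  · intro e
    exact congrFun e ⟨false⟩
  · intro e
    funext i
    rcases i with ⟨_ | _⟩
    · exact e
    · rfl

/-- Let `K` be a class of algebras closed under finite direct products that
has the amalgamation property, and let `A ≤ B ≤ C` be algebras with `B, C ∈ K`. Then
`d_K(A,B) = d_K(A,C) ∩ B`. -/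
theorem statement_7 {L : FirstOrder.Language.{u, u}} [L.IsAlgebraic]
    {K : Set (Alg L)} (hfp : ClosedUnderFinProd K) (hAP : HasAmalgamation K)
    (C : Alg L) (hC : C ∈ K) (B : L.Substructure C.carrier)
    (hB : (Alg.mk (↥B) : Alg L) ∈ K)
    (A : L.Substructure C.carrier) (hAB : A ≤ B) :
    dominion K (↥B) (Subtype.val ⁻¹' (A : Set C.carrier)) =
      Subtype.val ⁻¹' dominion K C.carrier (A : Set C.carrier) := by
  ext b
  constructor
  · intro hb D hD g h hgh
    exact hb D hD (g.comp B.subtype.toHom) (h.comp B.subtype.toHom) (fun a ha => hgh a ha)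
  · intro hb D hD g h hgh
    let B' : Alg L := Alg.mk (↥B)
    let e₁ := graphEmb B' D g
    let e₂ := graphEmb B' D h
    have hP : Alg.pi (fun i : ULift.{u} Bool => bif i.down then B' else D) ∈ K := by
      apply hfp _ inferInstance
      rintro ⟨_ | _⟩
      · exact hD
      · exact hB
    let ι : B'.carrier ↪[L] C.carrier := B.subtype
    obtain ⟨E, hE, p, q, hpq⟩ := hAP B' C _ hB hC hP ι e₁
    obtain ⟨F, hF, p₂, r, hpr⟩ := hAP B' C E hB hC hE ι (q.comp e₂)
    have key := hb F hF (r.comp p).toHom p₂.toHom (by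
      intro a ha
      have h1 := hpq ⟨a, hAB ha⟩
      have h2 := hpr ⟨a, hAB ha⟩
      have h3 : e₁ ⟨a, hAB ha⟩ = e₂ ⟨a, hAB ha⟩ :=
        (graphEmb_eq_iff B' D g h _).2 (hgh ⟨a, hAB ha⟩ ha)
      change r (p (ι ⟨a, hAB ha⟩)) = p₂ (ι ⟨a, hAB ha⟩)
      rw [h1, h2, h3]
      rfl)
    change r (p (ι b)) = p₂ (ι b) at key
    rw [hpq b, hpr b] at key
    exact (graphEmb_eq_iff B' D g h b).1 (q.injective (r.injective key))

end Impl
end
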